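/- arXiv:2512.19865 — 3 statements merged into one kernel-verified Lean document; each statement's English description precedes it below -/
import Mathlib

section
/- Let ω ⊂ ℝ² be an open set, let f ∈ L¹(ω) with f ≥ 0 in ω, and suppose u satisfies −Δu = f in ω. Then for any ball B_ρ(x₀) with B_ρ(x₀) ⊂ ω and any r ∈ (0, ρ): u(x₀) − inf_ω u ≥ (1/(2π)) (∫_{B_r(x₀)} f(x) dx) · log(ρ/r). -/
open MeasureTheory Filter Metric Set
open scoped ENNReal NNReal Topology

noncomputable section

abbrev E2 : Type := EuclideanSpace ℝ (Fin 2)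

/-- The Laplacian `Δφ = ∑ᵢ ∂²φ/∂xᵢ²` of a function on `ℝ²`. -/
noncomputable def lap (φ : E2 → ℝ) (x : E2) : ℝ :=
  ∑ i : Fin 2,
    iteratedFDeriv ℝ 2 φ x ![EuclideanSpace.single i 1, EuclideanSpace.single i 1]

/-- The Riesz-type convolution operator `I_μ f (x) = ∫_{ℝ²} f(y) |x-y|^{-μ} dy`. -/
noncomputable def Imu (μ : ℝ) (f : E2 → ℝ) (x : E2) : ℝ :=
  ∫ y : E2, f y / ‖x - y‖ ^ μ

/-- `u` is a distributional solution of `-Δu = f` on the open set `ω ⊆ ℝ²`: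
`u ∈ L¹_loc(ω)` and `-∫ u Δφ = ∫ f φ` for all test functions `φ ∈ C_c^∞(ω)`. -/
def IsDistribSol (ω : Set E2) (u f : E2 → ℝ) : Prop :=
  LocallyIntegrableOn u ω volume ∧
    ∀ φ : E2 → ℝ, ContDiff ℝ (⊤ : ℕ∞) φ → HasCompactSupport φ → tsupport φ ⊆ ω →
      -∫ x in ω, u x * lap φ x = ∫ x in ω, f x * φ x

/-- The nonlocal nonlinearity `V · I_μ[e^{λu} χ_Ω] · e^{λu}`. -/
noncomputable def nlRHS (μ lam : ℝ) (V : E2 → ℝ) (Ω : Set E2) (u : E2 → ℝ) (x : E2) : ℝ :=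
  V x * Imu μ (Ω.indicator fun y => Real.exp (lam * u y)) x * Real.exp (lam * u x)

/-- A bounded domain (connected open bounded set) in `ℝ²`. -/
def IsBoundedDomain (s : Set E2) : Prop :=
  IsOpen s ∧ IsConnected s ∧ Bornology.IsBounded s

/-! The test function is the Green function of a disc, with both of its singular parts smeared out:
`φ` is radial, `C_c^∞`, nonnegative, and `-Δφ = k₁ - k₂`, where `k₁`, `k₂` are probability
densities carried by a thin annulus around `x₀` and by an annulus close to `∂B_ρ(x₀)`. As
`s = |x - x₀|²` turns `Δ` into `4 (s η')'` in dimension two, it is enough to take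
`η' = -Q / (4 π s)` for a smooth plateau `Q`, and then `φ ≥ log (ρ₁ / r) / (2 π)` on `B_r(x₀)`.
Testing `-Δu = f` with `φ` gives `∫ u k₁ - ∫ u k₂ ≥ log (ρ₁ / r) / (2 π) ∫_{B_r} f`, in which
`∫ u k₂ ≥ inf u`, while `∫ u k₁` is asymptotically at most `u x₀` as the inner annulus shrinks
to `x₀`. -/

/-! ### Integrals against compactly supported weights and probability densities -/

section Integration

variable {α : Type*} [MeasurableSpace α] {μ : Measure α} {f φ u k : α → ℝ} {s : Set α} {A c m : ℝ}

lemma integrable_mul_of_tsupport_subset {X : Type*} [MeasurableSpace X] [TopologicalSpace X]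
    [OpensMeasurableSpace X] [T2Space X] {ν : Measure X} {g ψ : X → ℝ} {t : Set X}
    (hg : LocallyIntegrableOn g t ν) (hψ : Continuous ψ) (hψc : HasCompactSupport ψ)
    (hψt : tsupport ψ ⊆ t) : Integrable (fun x => g x * ψ x) ν := by
  have hsupp : Function.support (fun x => g x * ψ x) ⊆ tsupport ψ :=
    (Function.support_mul_subset_right g ψ).trans (subset_tsupport ψ)
  exact (integrableOn_iff_integrable_of_support_subset hsupp).1 <|
    (hg.integrableOn_compact_subset hψt hψc).mul_continuousOn_of_subset hψ.continuousOn
      (isClosed_tsupport ψ).measurableSet hψc Subset.rfl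

lemma integral_mul_density_le (hk : ∀ x, 0 ≤ k x) (hk_one : ∫ x, k x ∂μ = 1)
    (huk : Integrable (fun x => u x * k x) μ) (hu : ∀ᵐ x ∂μ, k x ≠ 0 → u x ≤ A) :
    ∫ x, u x * k x ∂μ ≤ A := by
  calc ∫ x, u x * k x ∂μ ≤ ∫ x, A * k x ∂μ := by
        refine integral_mono_ae huk ((integrable_of_integral_eq_one hk_one).const_mul A) ?_
        filter_upwards [hu] with x hx
        rcases eq_or_ne (k x) 0 with hkx | hkx
        · simp [hkx]
        · exact mul_le_mul_of_nonneg_right (hx hkx) (hk x)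
    _ = A := by rw [integral_const_mul, hk_one, mul_one]

lemma le_integral_mul_density (hk : ∀ x, 0 ≤ k x) (hk_one : ∫ x, k x ∂μ = 1)
    (huk : Integrable (fun x => u x * k x) μ) (hu : ∀ᵐ x ∂μ, k x ≠ 0 → m ≤ u x) :
    m ≤ ∫ x, u x * k x ∂μ := by
  have hneg : ∫ x, -u x * k x ∂μ ≤ -m :=
    integral_mul_density_le hk hk_one
      (huk.neg.congr (ae_of_all _ fun x => (neg_mul (u x) (k x)).symm))
      (hu.mono fun x hx hkx => neg_le_neg (hx hkx))
  simp only [neg_mul, integral_neg] at hneg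
  exact neg_le_neg_iff.1 hneg

lemma mul_setIntegral_le_integral_mul (hs : MeasurableSet s) (hf : IntegrableOn f s μ)
    (hfφ : Integrable (fun x => f x * φ x) μ) (hf_nonneg : 0 ≤ᵐ[μ.restrict s] f)
    (hfφ_nonneg : 0 ≤ᵐ[μ] fun x => f x * φ x) (hφ : ∀ x ∈ s, c ≤ φ x) :
    c * ∫ x in s, f x ∂μ ≤ ∫ x, f x * φ x ∂μ := by
  calc c * ∫ x in s, f x ∂μ = ∫ x in s, f x * c ∂μ := by rw [integral_mul_const, mul_comm]
    _ ≤ ∫ x in s, f x * φ x ∂μ := by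
        refine integral_mono_ae (hf.mul_const c) hfφ.integrableOn ?_
        filter_upwards [hf_nonneg, ae_restrict_mem hs] with x hfx hxs
        exact mul_le_mul_of_nonneg_left (hφ x hxs) hfx
    _ ≤ ∫ x, f x * φ x ∂μ := setIntegral_le_integral hfφ hfφ_nonneg

end Integration

/-! ### Radial functions -/

section Radial

lemma tsupport_comp_norm_sub_sq_subset {E : Type*} [SeminormedAddCommGroup E] {g : ℝ → ℝ} {R : ℝ}
    (hR : 0 ≤ R) (hg : ∀ s, R ^ 2 < s → g s = 0) (x₀ : E) :
    tsupport (fun x => g (‖x - x₀‖ ^ 2)) ⊆ closedBall x₀ R := by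
  refine closure_minimal (fun x hx => ?_) isClosed_closedBall
  by_contra hxR
  rw [mem_closedBall, dist_eq_norm, not_le] at hxR
  exact hx (hg _ (by gcongr))

variable {E : Type*} [NormedAddCommGroup E] [InnerProductSpace ℝ E] {η η' : ℝ → ℝ} {η'' : ℝ}
  {x₀ x : E}

lemma hasFDerivAt_comp_norm_sub_sq {b : ℝ} (hη : HasDerivAt η b (‖x - x₀‖ ^ 2)) :
    HasFDerivAt (fun y => η (‖y - x₀‖ ^ 2)) ((2 * b) • innerSL ℝ (x - x₀)) x := by
  have hsq : HasFDerivAt (fun y => ‖y - x₀‖ ^ 2) (2 • innerSL ℝ (x - x₀)) x := by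
    simpa using ((hasFDerivAt_id x).sub_const x₀).norm_sq
  refine (hη.comp_hasFDerivAt x hsq).congr_fderiv ?_
  module

lemma iteratedFDeriv_two_comp_norm_sub_sq (hη : ∀ s, HasDerivAt η (η' s) s)
    (hη' : HasDerivAt η' η'' (‖x - x₀‖ ^ 2)) (v w : E) :
    iteratedFDeriv ℝ 2 (fun y => η (‖y - x₀‖ ^ 2)) x ![v, w]
      = 2 * η' (‖x - x₀‖ ^ 2) * inner ℝ v w
        + 4 * η'' * inner ℝ (x - x₀) v * inner ℝ (x - x₀) w := by
  have hgrad : fderiv ℝ (fun y => η (‖y - x₀‖ ^ 2)) =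
      fun y => (2 * η' (‖y - x₀‖ ^ 2)) • innerSL ℝ (y - x₀) :=
    funext fun y => (hasFDerivAt_comp_norm_sub_sq (hη _)).fderiv
  have hlin : HasFDerivAt (fun y => innerSL ℝ (y - x₀)) (innerSL ℝ : E →L[ℝ] E →L[ℝ] ℝ) x :=
    (innerSL ℝ : E →L[ℝ] E →L[ℝ] ℝ).hasFDerivAt.comp x ((hasFDerivAt_id x).sub_const x₀)
  have hhess := (((hasFDerivAt_comp_norm_sub_sq hη').const_mul 2).smul hlin).fderiv
  simp only [Pi.smul_def'] at hhess
  rw [iteratedFDeriv_two_apply, hgrad, hhess]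
  have hinner : (innerSL ℝ : E →L[ℝ] E →L[ℝ] ℝ) v w = inner ℝ v w := innerSL_apply_apply ℝ v w
  simp only [add_apply, smul_apply, ContinuousLinearMap.smulRight_apply, Matrix.cons_val_zero,
    Matrix.cons_val_one, innerSL_apply_apply, hinner, smul_eq_mul]
  ring

lemma laplacian_comp_norm_sub_sq [FiniteDimensional ℝ E] (hη : ∀ s, HasDerivAt η (η' s) s)
    (hη' : HasDerivAt η' η'' (‖x - x₀‖ ^ 2)) :
    Laplacian.laplacian (fun y => η (‖y - x₀‖ ^ 2)) x
      = 2 * Module.finrank ℝ E * η' (‖x - x₀‖ ^ 2) + 4 * ‖x - x₀‖ ^ 2 * η'' := by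
  let e := stdOrthonormalBasis ℝ E
  have hterm (i : Fin (Module.finrank ℝ E)) :
      iteratedFDeriv ℝ 2 (fun y => η (‖y - x₀‖ ^ 2)) x ![e i, e i]
        = 2 * η' (‖x - x₀‖ ^ 2) + 4 * η'' * inner ℝ (x - x₀) (e i) ^ 2 := by
    rw [iteratedFDeriv_two_comp_norm_sub_sq hη hη', real_inner_self_eq_norm_sq, e.norm_eq_one]
    ring
  simp only [InnerProductSpace.laplacian_eq_iteratedFDeriv_orthonormalBasis _ e, hterm,
    Finset.sum_add_distrib, ← Finset.mul_sum, e.sum_sq_inner_left, Finset.sum_const,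
    Finset.card_univ, Fintype.card_fin, nsmul_eq_mul]
  ring

lemma lap_eq_laplacian (φ : E2 → ℝ) : lap φ = Laplacian.laplacian φ := by
  rw [InnerProductSpace.laplacian_eq_iteratedFDeriv_orthonormalBasis φ
    (EuclideanSpace.basisFun (Fin 2) ℝ)]
  simp only [EuclideanSpace.basisFun_apply]
  rfl

lemma integral_comp_norm_sub_sq {F : Type*} [NormedAddCommGroup F] [NormedSpace ℝ F] (g : ℝ → F)
    (x₀ : E2) : ∫ x : E2, g (‖x - x₀‖ ^ 2) = Real.pi • ∫ s in Ioi (0 : ℝ), g s := by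
  have hvol : (volume : Measure E2).real (ball 0 1) = Real.pi := by
    simp [Measure.real, Real.pi_pos.le]
  have hsubst : ∫ y in Ioi (0 : ℝ), (2 * y) • g (y ^ 2) = ∫ s in Ioi (0 : ℝ), g s := by
    rw [← integral_comp_rpow_Ioi_of_pos (g := g) two_pos]
    norm_num
  calc ∫ x : E2, g (‖x - x₀‖ ^ 2) = ∫ x : E2, g (‖x‖ ^ 2) :=
        integral_sub_right_eq_self (fun x : E2 => g (‖x‖ ^ 2)) x₀
    _ = 2 • Real.pi • ∫ y in Ioi (0 : ℝ), y • g (y ^ 2) := by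
        rw [integral_fun_norm_addHaar volume (fun y : ℝ => g (y ^ 2)), hvol,
          finrank_euclideanSpace_fin]
        simp only [Nat.add_one_sub_one, pow_one]
    _ = Real.pi • ∫ y in Ioi (0 : ℝ), (2 * y) • g (y ^ 2) := by
        simp only [mul_smul, integral_smul]
        module
    _ = Real.pi • ∫ s in Ioi (0 : ℝ), g s := by rw [hsubst]

end Radial

/-! ### Smooth steps and densities on annuli -/

/-- A smooth monotone transition from `0` on `(-∞, a]` to `1` on `[b, ∞)`, for `a < b`. -/
def smoothStep (a b s : ℝ) : ℝ := Real.smoothTransition ((s - a) / (b - a))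

section SmoothStep

variable {a b s : ℝ}

lemma contDiff_smoothStep {n : ℕ∞} : ContDiff ℝ n (smoothStep a b) :=
  Real.smoothTransition.contDiff.comp ((contDiff_id.sub contDiff_const).div_const _)

lemma differentiable_smoothStep : Differentiable ℝ (smoothStep a b) :=
  (contDiff_smoothStep (n := 1)).differentiable (by simp)

lemma smoothStep_nonneg : 0 ≤ smoothStep a b s := Real.smoothTransition.nonneg _

lemma smoothStep_le_one : smoothStep a b s ≤ 1 := Real.smoothTransition.le_one _

lemma monotone_smoothStep (hab : a ≤ b) : Monotone (smoothStep a b) := fun _ _ hst =>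
  Real.smoothTransition.monotone
    (div_le_div_of_nonneg_right (sub_le_sub_right hst a) (sub_nonneg.2 hab))

lemma smoothStep_of_le (hab : a ≤ b) (hs : s ≤ a) : smoothStep a b s = 0 :=
  Real.smoothTransition.zero_of_nonpos
    (div_nonpos_of_nonpos_of_nonneg (sub_nonpos.2 hs) (sub_nonneg.2 hab))

lemma smoothStep_of_ge (hab : a < b) (hs : b ≤ s) : smoothStep a b s = 1 :=
  Real.smoothTransition.one_of_one_le
    ((one_le_div (sub_pos.2 hab)).2 (sub_le_sub_right hs a))

lemma deriv_smoothStep_of_gt (hab : a < b) (hs : b < s) : deriv (smoothStep a b) s = 0 := by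
  have h_one : smoothStep a b =ᶠ[𝓝 s] fun _ => 1 := by
    filter_upwards [Ioi_mem_nhds hs] with t ht using smoothStep_of_ge hab (le_of_lt ht)
  rw [h_one.deriv_eq, deriv_const]

lemma integral_Ioi_deriv_smoothStep (ha : 0 ≤ a) (hab : a < b) :
    ∫ s in Ioi (0 : ℝ), deriv (smoothStep a b) s = 1 := by
  have hlim : Tendsto (smoothStep a b) atTop (𝓝 1) :=
    tendsto_const_nhds.congr' <| (eventually_ge_atTop b).mono fun s hs =>
      (smoothStep_of_ge hab hs).symm
  rw [integral_Ioi_of_hasDerivAt_of_nonneg'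
    (fun s _ => (differentiable_smoothStep s).hasDerivAt)
    (fun _ _ => (monotone_smoothStep hab.le).deriv_nonneg) hlim,
    smoothStep_of_le hab.le ha, sub_zero]

end SmoothStep

/-- A smooth radial probability density on `ℝ²` carried by the annulus `p ≤ |x - x₀| ≤ q`. -/
def annulusDensity (p q : ℝ) (x₀ x : E2) : ℝ :=
  deriv (smoothStep (p ^ 2) (q ^ 2)) (‖x - x₀‖ ^ 2) / Real.pi

section AnnulusDensity

variable {p q : ℝ} {x₀ : E2}

lemma continuous_annulusDensity : Continuous (annulusDensity p q x₀) :=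
  (((contDiff_smoothStep (n := 1)).continuous_deriv le_rfl).comp
    ((continuous_id.sub continuous_const).norm.pow 2)).div_const _

lemma annulusDensity_nonneg (hp : 0 ≤ p) (hpq : p ≤ q) (x : E2) : 0 ≤ annulusDensity p q x₀ x :=
  div_nonneg (monotone_smoothStep (by gcongr)).deriv_nonneg Real.pi_pos.le

lemma integral_annulusDensity (hp : 0 ≤ p) (hpq : p < q) :
    ∫ x, annulusDensity p q x₀ x = 1 := by
  have hmass := integral_comp_norm_sub_sq (deriv (smoothStep (p ^ 2) (q ^ 2))) x₀
  rw [integral_Ioi_deriv_smoothStep (by positivity) (by gcongr), smul_eq_mul, mul_one] at hmass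
  simp only [annulusDensity, integral_div, hmass, div_self Real.pi_ne_zero]

lemma tsupport_annulusDensity_subset (hp : 0 ≤ p) (hpq : p < q) :
    tsupport (annulusDensity p q x₀) ⊆ closedBall x₀ q :=
  tsupport_comp_norm_sub_sq_subset (g := fun s => deriv (smoothStep (p ^ 2) (q ^ 2)) s / Real.pi)
    (hp.trans hpq.le) (fun s hs => by rw [deriv_smoothStep_of_gt (by gcongr) hs, zero_div]) x₀

lemma integrable_mul_annulusDensity {u : E2 → ℝ} {s : Set E2} (hu : LocallyIntegrableOn u s)
    (hp : 0 ≤ p) (hpq : p < q) (hs : closedBall x₀ q ⊆ s) :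
    Integrable fun x => u x * annulusDensity p q x₀ x :=
  have hsupp := tsupport_annulusDensity_subset (x₀ := x₀) hp hpq
  integrable_mul_of_tsupport_subset hu continuous_annulusDensity
    ((isCompact_closedBall x₀ q).of_isClosed_subset (isClosed_tsupport _) hsupp)
    (hsupp.trans hs)

end AnnulusDensity

/-! ### Radial potentials in the plane -/

/-- The profile of a radial potential on `ℝ²` in the variable `s = |x - x₀|²`: it vanishes at
`s = d`, and `x ↦ radialPotential Q d (|x - x₀|²)` has negative Laplacian `Q'(|x - x₀|²) / π`. -/
def radialPotential (Q : ℝ → ℝ) (d s : ℝ) : ℝ := (4 * Real.pi)⁻¹ * ∫ t in s..d, Q t / t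

section RadialPotential

variable {Q : ℝ → ℝ} {b c d s t : ℝ}

lemma contDiff_div_id {n : WithTop ℕ∞} (hQ : ContDiff ℝ n Q) (hQ0 : Q =ᶠ[𝓝 0] 0) :
    ContDiff ℝ n fun t => Q t / t := by
  refine contDiff_iff_contDiffAt.2 fun t => ?_
  rcases eq_or_ne t 0 with rfl | ht
  · have h_zero : (fun t => Q t / t) =ᶠ[𝓝 0] fun _ => 0 :=
      hQ0.mono fun t ht => by simp only [ht, Pi.zero_apply, zero_div]
    exact contDiffAt_const.congr_of_eventuallyEq h_zero
  · exact hQ.contDiffAt.div contDiffAt_id ht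

lemma hasDerivAt_radialPotential (hQ : Continuous fun t => Q t / t) (d s : ℝ) :
    HasDerivAt (radialPotential Q d) ((4 * Real.pi)⁻¹ * -(Q s / s)) s :=
  (intervalIntegral.integral_hasDerivAt_left (hQ.intervalIntegrable s d)
    (hQ.stronglyMeasurableAtFilter _ _) hQ.continuousAt).const_mul _

lemma contDiff_radialPotential (hQ : ContDiff ℝ (⊤ : ℕ∞) Q) (hQ0 : Q =ᶠ[𝓝 0] 0) (d : ℝ) :
    ContDiff ℝ (⊤ : ℕ∞) (radialPotential Q d) := by
  have hQdiv := contDiff_div_id hQ hQ0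
  have hderiv := hasDerivAt_radialPotential hQdiv.continuous d
  refine contDiff_infty_iff_deriv.2 ⟨fun s => (hderiv s).differentiableAt, ?_⟩
  rw [funext fun s => (hderiv s).deriv]
  exact contDiff_const.mul hQdiv.neg

lemma lap_radialPotential (hQ : ContDiff ℝ 1 Q) (hQ0 : Q =ᶠ[𝓝 0] 0) (d : ℝ) (x₀ x : E2) :
    lap (fun y => radialPotential Q d (‖y - x₀‖ ^ 2)) x = -deriv Q (‖x - x₀‖ ^ 2) / Real.pi := by
  have hQdiv := contDiff_div_id hQ hQ0
  set q := ‖x - x₀‖ ^ 2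
  have hslope : HasDerivAt (fun t => Q t / t) (deriv (fun t => Q t / t) q) q :=
    (hQdiv.differentiable one_ne_zero q).hasDerivAt
  have hQ_eq : (fun t => t * (Q t / t)) = Q := by
    funext t
    rcases eq_or_ne t 0 with rfl | ht
    · simpa using hQ0.eq_of_nhds.symm
    · exact mul_div_cancel₀ _ ht
  have hprod : Q q / q + q * deriv (fun t => Q t / t) q = deriv Q q := by
    have h := ((hasDerivAt_id q).mul hslope).deriv
    rw [one_mul] at h
    exact h.symm.trans (congrArg (deriv · q) hQ_eq)
  rw [lap_eq_laplacian, laplacian_comp_norm_sub_sq (hasDerivAt_radialPotential hQdiv.continuous d)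
    (hslope.neg.const_mul _), ← hprod, finrank_euclideanSpace_fin]
  push_cast
  field_simp
  ring

lemma radialPotential_of_ge (hQd : ∀ t, d ≤ t → Q t = 0) (hs : d ≤ s) :
    radialPotential Q d s = 0 := by
  have h_zero : ∫ t in s..d, Q t / t = ∫ _ in s..d, 0 :=
    intervalIntegral.integral_congr fun t ht => by
      rw [uIcc_of_ge hs] at ht
      simp only [hQd t ht.1, zero_div]
  rw [radialPotential, h_zero, intervalIntegral.integral_zero, mul_zero]

lemma radialPotential_nonneg (hQ : ∀ t, 0 ≤ Q t) (hQd : ∀ t, d ≤ t → Q t = 0) (hs : 0 ≤ s) :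
    0 ≤ radialPotential Q d s := by
  rcases le_total d s with hds | hsd
  · exact (radialPotential_of_ge hQd hds).ge
  · exact mul_nonneg (by positivity) <| intervalIntegral.integral_nonneg hsd fun t ht =>
      div_nonneg (hQ t) (hs.trans ht.1)

lemma log_div_le_radialPotential (hQc : Continuous fun t => Q t / t) (hQ : ∀ t, 0 ≤ Q t)
    (hQ_one : ∀ t, b ≤ t → t ≤ c → Q t = 1) (hb : 0 < b) (hbc : b ≤ c) (hcd : c ≤ d)
    (hs : 0 ≤ s) (hsb : s ≤ b) :
    (4 * Real.pi)⁻¹ * Real.log (c / b) ≤ radialPotential Q d s := by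
  have hplateau : ∫ t in b..c, Q t / t = Real.log (c / b) := by
    rw [← integral_one_div_of_pos hb (hb.trans_le hbc)]
    refine intervalIntegral.integral_congr fun t ht => ?_
    rw [uIcc_of_le hbc] at ht
    simp only [hQ_one t ht.1 ht.2]
  unfold radialPotential
  gcongr
  rw [← hplateau]
  refine intervalIntegral.integral_mono_interval hsb hbc hcd ?_ (hQc.intervalIntegrable s d)
  filter_upwards [ae_restrict_mem measurableSet_Ioc] with t ht
  exact div_nonneg (hQ t) (hs.trans ht.1.le)

end RadialPotential

/-! ### The mollified Green function -/

/-- A smooth function equal to `1` on `[b, c]` and to `0` off `[a, d]`, for `a < b ≤ c < d`. -/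
def smoothPlateau (a b c d s : ℝ) : ℝ := smoothStep a b s - smoothStep c d s

section SmoothPlateau

variable {a b c d s : ℝ}

lemma contDiff_smoothPlateau {n : ℕ∞} : ContDiff ℝ n (smoothPlateau a b c d) :=
  contDiff_smoothStep.sub contDiff_smoothStep

lemma smoothPlateau_nonneg (hab : a < b) (hbc : b ≤ c) (hcd : c ≤ d) :
    0 ≤ smoothPlateau a b c d s := by
  rcases le_total s c with hs | hs
  · rw [smoothPlateau, smoothStep_of_le hcd hs, sub_zero]
    exact smoothStep_nonneg
  · rw [smoothPlateau, smoothStep_of_ge hab (hbc.trans hs)]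
    exact sub_nonneg.2 smoothStep_le_one

lemma smoothPlateau_of_le (hab : a ≤ b) (hac : a ≤ c) (hcd : c ≤ d) (hs : s ≤ a) :
    smoothPlateau a b c d s = 0 := by
  rw [smoothPlateau, smoothStep_of_le hab hs, smoothStep_of_le hcd (hs.trans hac), sub_zero]

lemma smoothPlateau_of_ge (hab : a < b) (hbd : b ≤ d) (hcd : c < d) (hs : d ≤ s) :
    smoothPlateau a b c d s = 0 := by
  rw [smoothPlateau, smoothStep_of_ge hab (hbd.trans hs), smoothStep_of_ge hcd hs, sub_self]

lemma smoothPlateau_eq_one (hab : a < b) (hcd : c ≤ d) (hbs : b ≤ s) (hsc : s ≤ c) :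
    smoothPlateau a b c d s = 1 := by
  rw [smoothPlateau, smoothStep_of_ge hab hbs, smoothStep_of_le hcd hsc, sub_zero]

lemma smoothPlateau_eventuallyEq_zero (ha : 0 < a) (hab : a ≤ b) (hac : a ≤ c) (hcd : c ≤ d) :
    smoothPlateau a b c d =ᶠ[𝓝 0] 0 := by
  filter_upwards [Iio_mem_nhds ha] with s hs using smoothPlateau_of_le hab hac hcd (le_of_lt hs)

lemma deriv_smoothPlateau :
    deriv (smoothPlateau a b c d) s = deriv (smoothStep a b) s - deriv (smoothStep c d) s :=
  deriv_sub (differentiable_smoothStep s) (differentiable_smoothStep s)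

end SmoothPlateau

/-- The compactly supported radial potential of `annulusDensity p q x₀ - annulusDensity P R x₀`.
It stands in for the Green function of `B_R(x₀)` with pole `x₀`. -/
def mollifiedGreen (p q P R : ℝ) (x₀ x : E2) : ℝ :=
  radialPotential (smoothPlateau (p ^ 2) (q ^ 2) (P ^ 2) (R ^ 2)) (R ^ 2) (‖x - x₀‖ ^ 2)

section MollifiedGreen

variable {p q P R r : ℝ} {x₀ x : E2}

lemma smoothPlateau_sq_eventuallyEq_zero (hp : 0 < p) (hpq : p < q) (hqP : q ≤ P) (hPR : P < R) :
    smoothPlateau (p ^ 2) (q ^ 2) (P ^ 2) (R ^ 2) =ᶠ[𝓝 0] 0 := by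
  have hq : 0 < q := hp.trans hpq
  have hP : 0 < P := hq.trans_le hqP
  refine smoothPlateau_eventuallyEq_zero (by positivity) (by gcongr) ?_ (by gcongr)
  exact pow_le_pow_left₀ hp.le (hpq.le.trans hqP) 2

lemma smoothPlateau_sq_nonneg (hp : 0 ≤ p) (hpq : p < q) (hqP : q ≤ P) (hPR : P ≤ R) (s : ℝ) :
    0 ≤ smoothPlateau (p ^ 2) (q ^ 2) (P ^ 2) (R ^ 2) s := by
  have hq : 0 < q := hp.trans_lt hpq
  have hP : 0 < P := hq.trans_le hqP
  exact smoothPlateau_nonneg (by gcongr) (by gcongr) (by gcongr)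

lemma smoothPlateau_sq_of_ge (hp : 0 ≤ p) (hpq : p < q) (hqP : q ≤ P) (hPR : P < R) (s : ℝ)
    (hs : R ^ 2 ≤ s) : smoothPlateau (p ^ 2) (q ^ 2) (P ^ 2) (R ^ 2) s = 0 := by
  have hq : 0 < q := hp.trans_lt hpq
  have hP : 0 < P := hq.trans_le hqP
  refine smoothPlateau_of_ge (by gcongr) ?_ (by gcongr) hs
  exact pow_le_pow_left₀ hq.le (hqP.trans hPR.le) 2

lemma contDiff_mollifiedGreen (hp : 0 < p) (hpq : p < q) (hqP : q ≤ P) (hPR : P < R) :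
    ContDiff ℝ (⊤ : ℕ∞) (mollifiedGreen p q P R x₀) :=
  (contDiff_radialPotential contDiff_smoothPlateau
    (smoothPlateau_sq_eventuallyEq_zero hp hpq hqP hPR) _).comp
    ((contDiff_id.sub contDiff_const).norm_sq ℝ)

lemma lap_mollifiedGreen (hp : 0 < p) (hpq : p < q) (hqP : q ≤ P) (hPR : P < R) (x : E2) :
    lap (mollifiedGreen p q P R x₀) x = annulusDensity P R x₀ x - annulusDensity p q x₀ x := by
  unfold mollifiedGreen annulusDensity
  rw [lap_radialPotential contDiff_smoothPlateau
    (smoothPlateau_sq_eventuallyEq_zero hp hpq hqP hPR), deriv_smoothPlateau]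
  ring

lemma tsupport_mollifiedGreen_subset (hp : 0 ≤ p) (hpq : p < q) (hqP : q ≤ P) (hPR : P < R) :
    tsupport (mollifiedGreen p q P R x₀) ⊆ closedBall x₀ R :=
  tsupport_comp_norm_sub_sq_subset (hp.trans (hpq.le.trans (hqP.trans hPR.le)))
    (fun _ hs => radialPotential_of_ge (smoothPlateau_sq_of_ge hp hpq hqP hPR) hs.le) x₀

lemma hasCompactSupport_mollifiedGreen (hp : 0 ≤ p) (hpq : p < q) (hqP : q ≤ P) (hPR : P < R) :
    HasCompactSupport (mollifiedGreen p q P R x₀) :=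
  (isCompact_closedBall x₀ R).of_isClosed_subset (isClosed_tsupport _)
    (tsupport_mollifiedGreen_subset hp hpq hqP hPR)

lemma mollifiedGreen_nonneg (hp : 0 ≤ p) (hpq : p < q) (hqP : q ≤ P) (hPR : P < R) (x : E2) :
    0 ≤ mollifiedGreen p q P R x₀ x :=
  radialPotential_nonneg (smoothPlateau_sq_nonneg hp hpq hqP hPR.le)
    (smoothPlateau_sq_of_ge hp hpq hqP hPR) (sq_nonneg _)

lemma log_div_le_mollifiedGreen (hp : 0 < p) (hpq : p < q) (hqr : q ≤ r) (hrP : r ≤ P)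
    (hPR : P < R) (hx : ‖x - x₀‖ ≤ r) :
    1 / (2 * Real.pi) * Real.log (P / r) ≤ mollifiedGreen p q P R x₀ x := by
  have hq : 0 < q := hp.trans hpq
  have hr : 0 < r := hq.trans_le hqr
  have hP : 0 < P := hr.trans_le hrP
  have hqP : q ≤ P := hqr.trans hrP
  have hcont := (contDiff_div_id (contDiff_smoothPlateau (n := 0))
    (smoothPlateau_sq_eventuallyEq_zero hp hpq hqP hPR)).continuous
  have hone (t : ℝ) (hrt : r ^ 2 ≤ t) (htP : t ≤ P ^ 2) :
      smoothPlateau (p ^ 2) (q ^ 2) (P ^ 2) (R ^ 2) t = 1 :=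
    smoothPlateau_eq_one (by gcongr) (by gcongr) ((pow_le_pow_left₀ hq.le hqr 2).trans hrt) htP
  calc 1 / (2 * Real.pi) * Real.log (P / r)
      = (4 * Real.pi)⁻¹ * Real.log (P ^ 2 / r ^ 2) := by
        rw [← div_pow, Real.log_pow]
        push_cast
        field_simp
        ring
    _ ≤ mollifiedGreen p q P R x₀ x :=
        log_div_le_radialPotential hcont (smoothPlateau_sq_nonneg hp.le hpq hqP hPR.le) hone
          (by positivity) (by gcongr) (by gcongr) (by positivity) (by gcongr)

end MollifiedGreen

/-! ### Distributional solutions -/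

lemma setIntegral_mul_of_tsupport_subset {X : Type*} [TopologicalSpace X] [MeasurableSpace X]
    {ν : Measure X} {ψ : X → ℝ} {t : Set X} (hψ : tsupport ψ ⊆ t) (g : X → ℝ) :
    ∫ x in t, g x * ψ x ∂ν = ∫ x, g x * ψ x ∂ν :=
  setIntegral_eq_integral_of_forall_compl_eq_zero fun x hx => by
    rw [image_eq_zero_of_notMem_tsupport fun hxψ => hx (hψ hxψ), mul_zero]

lemma tsupport_lap_subset (φ : E2 → ℝ) : tsupport (lap φ) ⊆ tsupport φ := by
  refine closure_minimal (fun x hx => ?_) (isClosed_tsupport φ)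
  by_contra hxφ
  have hhess : iteratedFDeriv ℝ 2 φ x = 0 :=
    image_eq_zero_of_notMem_tsupport fun h => hxφ (tsupport_iteratedFDeriv_subset 2 h)
  exact hx (by simp [lap, hhess])

namespace IsDistribSol

variable {ω s : Set E2} {u f φ : E2 → ℝ} {x₀ : E2} {p q r P R ρ A m : ℝ}

lemma neg_integral_mul_lap (h : IsDistribSol ω u f) (hφ : ContDiff ℝ (⊤ : ℕ∞) φ)
    (hφc : HasCompactSupport φ) (hφω : tsupport φ ⊆ ω) :
    -∫ x, u x * lap φ x = ∫ x, f x * φ x := by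
  have htest := h.2 φ hφ hφc hφω
  rwa [setIntegral_mul_of_tsupport_subset ((tsupport_lap_subset φ).trans hφω),
    setIntegral_mul_of_tsupport_subset hφω] at htest

lemma mono (h : IsDistribSol ω u f) (hs : s ⊆ ω) : IsDistribSol s u f :=
  ⟨h.1.mono_set hs, fun φ hφ hφc hφs => by
    rw [setIntegral_mul_of_tsupport_subset ((tsupport_lap_subset φ).trans hφs),
      setIntegral_mul_of_tsupport_subset hφs]
    exact h.neg_integral_mul_lap hφ hφc (hφs.trans hs)⟩

lemma integral_mul_mollifiedGreen (h : IsDistribSol ω u f) (hp : 0 < p) (hpq : p < q)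
    (hqP : q ≤ P) (hPR : P < R) (hω : closedBall x₀ R ⊆ ω) :
    ∫ x, f x * mollifiedGreen p q P R x₀ x
      = (∫ x, u x * annulusDensity p q x₀ x) - ∫ x, u x * annulusDensity P R x₀ x := by
  have hP : 0 < P := hp.trans (hpq.trans_le hqP)
  have h_inner : Integrable fun x => u x * annulusDensity p q x₀ x :=
    integrable_mul_annulusDensity h.1 hp.le hpq
      ((closedBall_subset_closedBall (hqP.trans hPR.le)).trans hω)
  have h_outer : Integrable fun x => u x * annulusDensity P R x₀ x :=
    integrable_mul_annulusDensity h.1 hP.le hPR hω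
  rw [← h.neg_integral_mul_lap (contDiff_mollifiedGreen hp hpq hqP hPR)
    (hasCompactSupport_mollifiedGreen hp.le hpq hqP hPR)
    ((tsupport_mollifiedGreen_subset hp.le hpq hqP hPR).trans hω)]
  simp only [lap_mollifiedGreen hp hpq hqP hPR, mul_sub]
  rw [integral_sub h_outer h_inner, neg_sub]

lemma integral_mul_mollifiedGreen_le (h : IsDistribSol (ball x₀ ρ) u f) (hp : 0 < p)
    (hpq : p < q) (hqP : q ≤ P) (hPR : P < R) (hRρ : R < ρ)
    (hA : ∀ x ∈ closedBall x₀ q, u x ≤ A) (hm : ∀ᵐ x ∂volume.restrict (ball x₀ ρ), m ≤ u x) :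
    ∫ x, f x * mollifiedGreen p q P R x₀ x ≤ A - m := by
  have hP : 0 < P := hp.trans (hpq.trans_le hqP)
  have hR : closedBall x₀ R ⊆ ball x₀ ρ := closedBall_subset_ball hRρ
  have hq : closedBall x₀ q ⊆ ball x₀ ρ :=
    (closedBall_subset_closedBall (hqP.trans hPR.le)).trans hR
  have h_inner : ∫ x, u x * annulusDensity p q x₀ x ≤ A :=
    integral_mul_density_le (annulusDensity_nonneg hp.le hpq.le)
      (integral_annulusDensity hp.le hpq) (integrable_mul_annulusDensity h.1 hp.le hpq hq) <|
      ae_of_all _ fun x hx =>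
        hA x (tsupport_annulusDensity_subset hp.le hpq (subset_tsupport _ hx))
  have h_outer : m ≤ ∫ x, u x * annulusDensity P R x₀ x := by
    refine le_integral_mul_density (annulusDensity_nonneg hP.le hPR.le)
      (integral_annulusDensity hP.le hPR) (integrable_mul_annulusDensity h.1 hP.le hPR hR) ?_
    filter_upwards [(ae_restrict_iff' measurableSet_ball).1 hm] with x hx hxk
    exact hx (hR (tsupport_annulusDensity_subset hP.le hPR (subset_tsupport _ hxk)))
  rw [h.integral_mul_mollifiedGreen hp hpq hqP hPR hR]
  exact sub_le_sub h_inner h_outer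

lemma log_div_mul_setIntegral_le (h : IsDistribSol (ball x₀ ρ) u f)
    (hf : LocallyIntegrableOn f (ball x₀ ρ)) (hf_nonneg : 0 ≤ᵐ[volume.restrict (ball x₀ ρ)] f)
    (hA : ∀ x ∈ closedBall x₀ q, u x ≤ A) (hm : ∀ᵐ x ∂volume.restrict (ball x₀ ρ), m ≤ u x)
    (hq : 0 < q) (hqr : q ≤ r) (hrP : r ≤ P) (hPρ : P < ρ) :
    1 / (2 * Real.pi) * Real.log (P / r) * ∫ x in ball x₀ r, f x ≤ A - m := by
  obtain ⟨p, hp, hpq⟩ := exists_between hq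
  obtain ⟨R, hPR, hRρ⟩ := exists_between hPρ
  have hqP : q ≤ P := hqr.trans hrP
  have hsupp : tsupport (mollifiedGreen p q P R x₀) ⊆ ball x₀ ρ :=
    (tsupport_mollifiedGreen_subset hp.le hpq hqP hPR).trans (closedBall_subset_ball hRρ)
  have hr : closedBall x₀ r ⊆ ball x₀ ρ := closedBall_subset_ball (hrP.trans_lt hPρ)
  have hfr : IntegrableOn f (ball x₀ r) :=
    (hf.integrableOn_compact_subset hr (isCompact_closedBall x₀ r)).mono_set ball_subset_closedBall
  have hfG_nonneg : 0 ≤ᵐ[volume] fun x => f x * mollifiedGreen p q P R x₀ x := by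
    filter_upwards [(ae_restrict_iff' measurableSet_ball).1 hf_nonneg] with x hfx
    by_cases hx : x ∈ ball x₀ ρ
    · exact mul_nonneg (hfx hx) (mollifiedGreen_nonneg hp.le hpq hqP hPR x)
    · simp [image_eq_zero_of_notMem_tsupport fun hxG => hx (hsupp hxG)]
  calc 1 / (2 * Real.pi) * Real.log (P / r) * ∫ x in ball x₀ r, f x
      ≤ ∫ x, f x * mollifiedGreen p q P R x₀ x :=
        mul_setIntegral_le_integral_mul measurableSet_ball hfr
          (integrable_mul_of_tsupport_subset hf
            (contDiff_mollifiedGreen hp hpq hqP hPR).continuous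
            (hasCompactSupport_mollifiedGreen hp.le hpq hqP hPR) hsupp)
          (ae_restrict_of_ae_restrict_of_subset (ball_subset_closedBall.trans hr) hf_nonneg)
          hfG_nonneg fun x hx =>
            log_div_le_mollifiedGreen hp hpq hqr hrP hPR (mem_ball_iff_norm.1 hx).le
    _ ≤ A - m := h.integral_mul_mollifiedGreen_le hp hpq hqP hPR hRρ hA hm

lemma add_setIntegral_mul_log_div_le (h : IsDistribSol (ball x₀ ρ) u f)
    (hf : LocallyIntegrableOn f (ball x₀ ρ)) (hf_nonneg : 0 ≤ᵐ[volume.restrict (ball x₀ ρ)] f)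
    (hu : UpperSemicontinuousAt u x₀) (hm : ∀ᵐ x ∂volume.restrict (ball x₀ ρ), m ≤ u x)
    (hr : r ∈ Ioo 0 ρ) :
    m + 1 / (2 * Real.pi) * (∫ x in ball x₀ r, f x) * Real.log (ρ / r) ≤ u x₀ := by
  refine le_of_forall_gt_imp_ge_of_dense fun A hA => ?_
  obtain ⟨δ, hδ, hδA⟩ := nhds_basis_closedBall.eventually_iff.1 (hu A hA)
  have hA_ball (x : E2) (hx : x ∈ closedBall x₀ (min δ r)) : u x ≤ A :=
    (hδA (closedBall_subset_closedBall (min_le_left δ r) hx)).le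
  have hbound : ∀ᶠ P in 𝓝[<] ρ,
      1 / (2 * Real.pi) * Real.log (P / r) * ∫ x in ball x₀ r, f x ≤ A - m := by
    filter_upwards [Ioo_mem_nhdsLT hr.2] with P hP
    exact h.log_div_mul_setIntegral_le hf hf_nonneg hA_ball hm (lt_min hδ hr.1)
      (min_le_right δ r) hP.1.le hP.2
  have hlog : Tendsto (fun P => Real.log (P / r)) (𝓝[<] ρ) (𝓝 (Real.log (ρ / r))) :=
    ((continuousAt_id.div_const r).log
      (div_pos (hr.1.trans hr.2) hr.1).ne').tendsto.mono_left nhdsWithin_le_nhds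
  have hlimit := le_of_tendsto ((hlog.const_mul _).mul_const _) hbound
  linarith

end IsDistribSol

theorem stmt_14_general {f u : E2 → ℝ} {x₀ : E2} {ρ r : ℝ} (hsol : IsDistribSol (ball x₀ ρ) u f)
    (hf : LocallyIntegrableOn f (ball x₀ ρ)) (hf_nonneg : 0 ≤ᵐ[volume.restrict (ball x₀ ρ)] f)
    (hu : UpperSemicontinuousAt u x₀) (hr : r ∈ Ioo 0 ρ) :
    ∀ ε > (0 : ℝ), ∃ y ∈ ball x₀ ρ,
      u y + 1 / (2 * Real.pi) * (∫ x in ball x₀ r, f x) * Real.log (ρ / r) ≤ u x₀ + ε := by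
  intro ε hε
  by_contra! hlt
  have hm : ∀ᵐ y ∂volume.restrict (ball x₀ ρ),
      u x₀ + ε - 1 / (2 * Real.pi) * (∫ x in ball x₀ r, f x) * Real.log (ρ / r) ≤ u y := by
    filter_upwards [ae_restrict_mem measurableSet_ball] with y hy
    exact (sub_lt_iff_lt_add.2 (hlt y hy)).le
  have hbound := hsol.add_setIntegral_mul_log_div_le hf hf_nonneg hu hm hr
  linarith

/-- Lemma 4.3: Green-type lower bound.
If `-Δu = f ≥ 0` in `ω` and `B_ρ(x₀) ⊆ ω`, then for all `r ∈ (0, ρ)`: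
`u(x₀) - inf_ω u ≥ (1/(2π)) (∫_{B_r(x₀)} f) log(ρ/r)`
(expressed in the equivalent `ε`-form, so that `inf_ω u = -∞` is allowed). -/
theorem stmt_14
    (ω : Set E2) (hω : IsOpen ω)
    (f : E2 → ℝ) (hf : IntegrableOn f ω volume) (hf0 : ∀ x ∈ ω, 0 ≤ f x)
    (u : E2 → ℝ) (hu : ContinuousOn u ω)
    (hsol : IsDistribSol ω u f)
    (x₀ : E2) (ρ : ℝ) (hρ : 0 < ρ) (hball : ball x₀ ρ ⊆ ω)
    (r : ℝ) (hr : r ∈ Set.Ioo 0 ρ) :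
    ∀ ε > (0 : ℝ), ∃ y ∈ ω,
      u y + (1 / (2 * Real.pi)) * (∫ x in ball x₀ r, f x) * Real.log (ρ / r)
        ≤ u x₀ + ε := by
  intro ε hε
  obtain ⟨y, hy, hle⟩ := stmt_14_general (hsol.mono hball)
    (hf.mono_set hball).locallyIntegrableOn
    (ae_restrict_of_forall_mem measurableSet_ball fun x hx => hf0 x (hball hx))
    (hu.continuousAt (hω.mem_nhds (hball (mem_ball_self hρ)))).upperSemicontinuousAt hr ε hε
  exact ⟨y, hball hy, hle⟩
end
end

section
/- Let n ∈ ℕ, let (x̃, ρ) ∈ ℝⁿ × (0,∞) and let φ be a positive continuous function on the closed ball B̄_ρ(x̃). For any a > 0 there exist x ∈ B_ρ(x̃) and r = r(x) > 0 such that both φ(x) ≥ (ρ/(2r))^a · φ(x̃) and φ(x) ≥ (1/2)^a · max_{y ∈ B̄_r(x)} φ(y). -/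
open Metric Set

noncomputable section

/-! Maximise `(ρ - |y - c|) ^ a * φ y` over the closed ball about `c`. The product vanishes on the
sphere and is positive at `c`, so a maximiser `x` is interior. Comparing it with `c` gives the lower
bound on `φ x`; comparing it with points at distance at most `r = (ρ - |x - c|) / 2` from `x`, where
the weight has dropped at most by the factor `(1 / 2) ^ a`, gives the other one. -/

section DistanceWeighted

variable {X : Type*} [PseudoMetricSpace X] {c x y : X} {ρ a θ : ℝ} {φ : X → ℝ}

/-- The function `φ` on the closed ball of radius `ρ` about `c`, weighted by the `a`-th power of
`ρ - dist y c`, which is the distance from `y` to the bounding sphere in a Euclidean space. It is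
maximised to select the point in the selection lemma. Outside the ball the power has a negative base
and the value is not meaningful. -/
def distanceWeighted (c : X) (ρ a : ℝ) (φ : X → ℝ) (y : X) : ℝ :=
  (ρ - dist y c) ^ a * φ y

theorem continuousOn_distanceWeighted {s : Set X} (ha : 0 ≤ a) (hφ : ContinuousOn φ s) :
    ContinuousOn (distanceWeighted c ρ a φ) s :=
  (ContinuousOn.rpow_const (by fun_prop) fun _ _ ↦ Or.inr ha).mul hφ

theorem distanceWeighted_center_pos (hρ : 0 < ρ) (hφ : 0 < φ c) :
    0 < distanceWeighted c ρ a φ c := by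
  rw [distanceWeighted, dist_self, sub_zero]
  positivity

theorem mem_ball_of_distanceWeighted_ne_zero (ha : a ≠ 0) (hx : x ∈ closedBall c ρ)
    (hne : distanceWeighted c ρ a φ x ≠ 0) : x ∈ ball c ρ := by
  refine (mem_closedBall.mp hx).lt_of_ne fun hsphere ↦ hne ?_
  rw [distanceWeighted, hsphere, sub_self, Real.zero_rpow ha, zero_mul]

theorem div_rpow_mul_le_of_distanceWeighted_le (hx : x ∈ ball c ρ) (hy : y ∈ closedBall c ρ)
    (hle : distanceWeighted c ρ a φ y ≤ distanceWeighted c ρ a φ x) :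
    ((ρ - dist y c) / (ρ - dist x c)) ^ a * φ y ≤ φ x := by
  have hx_pos : 0 < ρ - dist x c := sub_pos.mpr hx
  have hy_nonneg : 0 ≤ ρ - dist y c := sub_nonneg.mpr hy
  rw [Real.div_rpow hy_nonneg hx_pos.le, div_mul_eq_mul_div,
    div_le_iff₀' (Real.rpow_pos_of_pos hx_pos a)]
  exact hle

theorem one_sub_mul_le_sub_dist_of_mem_closedBall (hy : y ∈ closedBall x (θ * (ρ - dist x c))) :
    (1 - θ) * (ρ - dist x c) ≤ ρ - dist y c := by
  linarith [mem_closedBall.mp hy, dist_triangle y x c]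

theorem one_sub_rpow_mul_le_of_isMaxOn_distanceWeighted (ha : 0 ≤ a) (hθ : θ ≤ 1)
    (hx : x ∈ ball c ρ) (hφx : 0 ≤ φ x)
    (hmax : IsMaxOn (distanceWeighted c ρ a φ) (closedBall c ρ) x)
    (hy : y ∈ closedBall x (θ * (ρ - dist x c))) : (1 - θ) ^ a * φ y ≤ φ x := by
  have hx_pos : 0 < ρ - dist x c := sub_pos.mpr hx
  have hθ_nonneg : 0 ≤ 1 - θ := sub_nonneg.mpr hθ
  have hweight := one_sub_mul_le_sub_dist_of_mem_closedBall hy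
  have hy_ball : y ∈ closedBall c ρ :=
    sub_nonneg.mp ((mul_nonneg hθ_nonneg hx_pos.le).trans hweight)
  rcases le_total (φ y) 0 with hφy | hφy
  · exact (mul_nonpos_of_nonneg_of_nonpos (Real.rpow_nonneg hθ_nonneg a) hφy).trans hφx
  · calc (1 - θ) ^ a * φ y
        ≤ ((ρ - dist y c) / (ρ - dist x c)) ^ a * φ y := by
          gcongr
          exact (le_div_iff₀ hx_pos).mpr hweight
      _ ≤ φ x := div_rpow_mul_le_of_distanceWeighted_le hx hy_ball (hmax hy_ball)

theorem stmt_15_general (hρ : 0 < ρ) (hball : IsCompact (closedBall c ρ))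
    (hφ : ContinuousOn φ (closedBall c ρ)) (hφc : 0 < φ c) (ha : 0 < a) :
    ∃ x ∈ ball c ρ, ∃ r : ℝ, 0 < r ∧
      (ρ / (2 * r)) ^ a * φ c ≤ φ x ∧
      ∀ y ∈ closedBall x r, ((1 : ℝ) / 2) ^ a * φ y ≤ φ x := by
  have hc : c ∈ closedBall c ρ := mem_closedBall_self hρ.le
  obtain ⟨x, hx, hmax⟩ :=
    hball.exists_isMaxOn ⟨c, hc⟩ (continuousOn_distanceWeighted (c := c) (ρ := ρ) ha.le hφ)
  have hx_ball : x ∈ ball c ρ := mem_ball_of_distanceWeighted_ne_zero ha.ne' hx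
    ((distanceWeighted_center_pos hρ hφc).trans_le (hmax hc)).ne'
  have hx_pos : 0 < ρ - dist x c := sub_pos.mpr hx_ball
  have hcenter : (ρ / (ρ - dist x c)) ^ a * φ c ≤ φ x := by
    simpa only [dist_self, sub_zero] using
      div_rpow_mul_le_of_distanceWeighted_le hx_ball hc (hmax hc)
  have hφx : 0 ≤ φ x := le_trans (by positivity) hcenter
  refine ⟨x, hx_ball, 1 / 2 * (ρ - dist x c), by positivity, ?_, fun y hy ↦ ?_⟩
  · rwa [← mul_assoc, mul_one_div_cancel two_ne_zero, one_mul]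
  · simpa only [sub_half] using one_sub_rpow_mul_le_of_isMaxOn_distanceWeighted ha.le
      one_half_lt_one.le hx_ball hφx hmax hy

end DistanceWeighted

/-- Lemma A.5: selection lemma.
For a positive continuous `φ` on `B̄_ρ(x̃) ⊆ ℝⁿ` and any `a > 0` there are
`x ∈ B_ρ(x̃)` and `r > 0` with `φ(x) ≥ (ρ/(2r))^a φ(x̃)` and
`φ(x) ≥ (1/2)^a max_{B̄_r(x)} φ`. -/
theorem stmt_15 (n : ℕ)
    (xt : EuclideanSpace ℝ (Fin n)) (ρ : ℝ) (hρ : 0 < ρ)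
    (φ : EuclideanSpace ℝ (Fin n) → ℝ)
    (hφc : ContinuousOn φ (closedBall xt ρ))
    (hφpos : ∀ y ∈ closedBall xt ρ, 0 < φ y)
    (a : ℝ) (ha : 0 < a) :
    ∃ x ∈ ball xt ρ, ∃ r : ℝ, 0 < r ∧
      (ρ / (2 * r)) ^ a * φ xt ≤ φ x ∧
      ∀ y ∈ closedBall x r, ((1 : ℝ) / 2) ^ a * φ y ≤ φ x :=
  stmt_15_general hρ (isCompact_closedBall xt ρ) hφc (hφpos xt (mem_closedBall_self hρ.le)) ha
end
end

section
/- Let μ ∈ (0,2), λ = (4−μ)/4 and A = (4(2−μ)/π)^{1/(4−μ)}. For k ∈ ℕ define u_k(x) = 2 log(Ak/(1 + k²|x|²)) on ℝ², set F_k = I_μ[e^{λu_k}] e^{λu_k} · (I_μ[e^{λu_k}] / I_μ[e^{λu_k}χ_{B_2}])^{0} appropriately, i.e. F_k(x) = V_k(x) I_μ[e^{λu_k}χ_{B_2}](x) e^{λu_k(x)} with V_k = I_μ[e^{λu_k}] / I_μ[e^{λu_k}χ_{B_2}], so that −Δu_k = F_k = 8k²/(1+k²|x|²)² on ℝ². Then,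 with Γ(y) = −(1/(2π)) log|y|, the function u_k − Γ∗F_k is constant on ℝ² and equals 2 log A − 2 log k; in particular u_k − Γ∗F_k → −∞ uniformly as k → ∞. -/
open MeasureTheory Filter Metric Set
open scoped ENNReal NNReal Topology

noncomputable section

/-- The fundamental solution `Γ(y) = -(1/2π) log |y|` of `-Δ` on `ℝ²`. -/
noncomputable def gammaKer (y : E2) : ℝ := -(1 / (2 * Real.pi)) * Real.log ‖y‖

/-! On a circle of radius `r` centred at the origin, `log ‖· - a‖` has average `log (max ‖a‖ r)`. In
polar coordinates this gives Newton's shell theorem in the plane: the logarithmic potential of a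
radial density `w` at `x` is the one-dimensional integral of `r w(r) log (max ‖x‖ r)`. Absolute
convergence follows from `|log t| = 2 log⁺ t - log t`, since `log⁺` is subadditive up to `log 2`
and the average of the second term is known. For the bubble density the radial integral has an
elementary antiderivative on each side of `r = ‖x‖`, and the `log (1 + K²‖x‖²)` it produces cancels
against that of the bubble itself.
-/

section PolarCoordinates

open Real

variable {F : Type*} [NormedAddCommGroup F] {f : ℂ → F}

lemma complexPolarCoord_symm_eq_circleMap (p : ℝ × ℝ) :
    Complex.polarCoord.symm p = circleMap 0 p.1 p.2 := by
  simp [circleMap, Complex.exp_mul_I]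

lemma quasiMeasurePreserving_circleMap :
    Measure.QuasiMeasurePreserving (fun p : ℝ × ℝ ↦ circleMap 0 p.1 p.2)
      (volume.restrict (Ioi 0 ×ˢ Ioo (-π) π)) volume := by
  have hmeas : Measurable fun p : ℝ × ℝ ↦ circleMap 0 p.1 p.2 := by
    unfold circleMap
    fun_prop
  refine ⟨hmeas, Measure.AbsolutelyContinuous.mk fun s hs hs0 ↦ ?_⟩
  have hzero : ∫⁻ p in Ioi (0 : ℝ) ×ˢ Ioo (-π) π,
      ENNReal.ofReal p.1 • s.indicator 1 (circleMap 0 p.1 p.2) = 0 := by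
    have := Complex.lintegral_comp_polarCoord_symm (s.indicator 1)
    simpa only [complexPolarCoord_symm_eq_circleMap, polarCoord_target, lintegral_indicator_one hs,
      hs0] using this
  rw [lintegral_eq_zero_iff (by fun_prop (disch := assumption))] at hzero
  rw [Measure.map_apply hmeas hs, measure_eq_zero_iff_ae_notMem]
  filter_upwards [hzero, ae_restrict_mem (measurableSet_Ioi.prod measurableSet_Ioo)]
    with p hp0 hp hps
  have hpos : ENNReal.ofReal p.1 ≠ 0 := (ENNReal.ofReal_pos.2 hp.1).ne'
  simp only [Pi.zero_apply, smul_eq_mul, mul_eq_zero, hpos, false_or] at hp0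
  simp [indicator_of_mem (show circleMap 0 p.1 p.2 ∈ s from hps)] at hp0

lemma integrableOn_Ioo_neg_pi_pi_comp_circleMap {c : ℂ} {r : ℝ} (hf : CircleIntegrable f c r) :
    IntegrableOn (fun θ ↦ f (circleMap c r θ)) (Ioo (-π) π) := by
  have hper : Function.Periodic (fun θ ↦ f (circleMap c r θ)) (2 * π) :=
    (periodic_circleMap c r).comp f
  rw [← intervalIntegrable_iff_integrableOn_Ioo_of_le (by linarith [pi_pos])]
  exact hper.intervalIntegrable₀ (by positivity) hf _ _

variable [NormedSpace ℝ F]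

lemma setIntegral_Ioo_neg_pi_pi_comp_circleMap (f : ℂ → F) (c : ℂ) (r : ℝ) :
    ∫ θ in Ioo (-π) π, f (circleMap c r θ) = (2 * π) • circleAverage f c r := by
  rw [circleAverage_eq_integral_add (-π), smul_inv_smul₀ (by positivity),
    intervalIntegral.integral_comp_add_right (fun θ ↦ f (circleMap c r θ)),
    ← integral_Ioc_eq_integral_Ioo, intervalIntegral.integral_of_le (by linarith [pi_pos])]
  ring_nf

lemma integrable_complex_iff_integrableOn_polar :
    Integrable f ↔
      IntegrableOn (fun p : ℝ × ℝ ↦ p.1 • f (circleMap 0 p.1 p.2)) (Ioi 0 ×ˢ Ioo (-π) π) := by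
  let e := Complex.measurableEquivRealProd.symm
  calc
    Integrable f ↔ IntegrableOn (f ∘ e) polarCoord.source := by
      rw [IntegrableOn, Measure.restrict_congr_set polarCoord_source_ae_eq_univ,
        Measure.restrict_univ,
        Complex.volume_preserving_equiv_real_prod.symm.integrable_comp_emb e.measurableEmbedding]
    _ ↔ IntegrableOn (fun p ↦ |p.1| • f (e (polarCoord.symm p))) polarCoord.target := by
      rw [← polarCoord.symm_image_target_eq_source,
        integrableOn_image_iff_integrableOn_abs_det_fderiv_smul volume
          polarCoord.open_target.measurableSet
          (fun p _ ↦ (hasFDerivAt_polarCoord_symm p).hasFDerivWithinAt) polarCoord.symm.injOn]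
      simp only [det_fderivPolarCoordSymm, Function.comp_apply]
    _ ↔ _ := integrableOn_congr_fun (fun p hp ↦ by
      rw [abs_of_pos hp.1, Complex.measurableEquivRealProd_symm_polarCoord_symm_apply,
        complexPolarCoord_symm_eq_circleMap]) polarCoord.open_target.measurableSet

theorem integrable_of_circleAverage_norm_le {g : ℝ → ℝ} (hf : AEStronglyMeasurable f)
    (hcirc : ∀ r > 0, CircleIntegrable f 0 r) (hg : IntegrableOn g (Ioi 0))
    (hle : ∀ r > 0, r * circleAverage (‖f ·‖) 0 r ≤ g r) : Integrable f := by
  rw [integrable_complex_iff_integrableOn_polar]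
  have hmeas : AEStronglyMeasurable (fun p : ℝ × ℝ ↦ p.1 • f (circleMap 0 p.1 p.2))
      (volume.restrict (Ioi 0 ×ˢ Ioo (-π) π)) :=
    measurable_fst.aestronglyMeasurable.smul
      (hf.comp_quasiMeasurePreserving quasiMeasurePreserving_circleMap)
  rw [IntegrableOn]
  rw [Measure.volume_eq_prod, ← Measure.prod_restrict] at hmeas ⊢
  refine (integrable_prod_iff hmeas).2 ⟨?_, ?_⟩
  · filter_upwards [ae_restrict_mem measurableSet_Ioi] with r hr
    exact (integrableOn_Ioo_neg_pi_pi_comp_circleMap (hcirc r hr)).smul r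
  · refine (hg.const_mul (2 * π)).mono' hmeas.norm.integral_prod_right' ?_
    filter_upwards [ae_restrict_mem measurableSet_Ioi] with r hr
    have hcalc : ∫ θ in Ioo (-π) π, ‖r • f (circleMap 0 r θ)‖ =
        2 * π * (r * circleAverage (‖f ·‖) 0 r) := by
      simp only [norm_smul, norm_of_nonneg (le_of_lt hr)]
      rw [integral_const_mul, setIntegral_Ioo_neg_pi_pi_comp_circleMap (‖f ·‖), smul_eq_mul]
      ring
    rw [norm_of_nonneg (integral_nonneg fun _ ↦ norm_nonneg _), hcalc]
    exact mul_le_mul_of_nonneg_left (hle r hr) two_pi_pos.le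

theorem integral_eq_integral_circleAverage (hf : Integrable f) :
    ∫ z, f z = (2 * π) • ∫ r in Ioi 0, r • circleAverage f 0 r := by
  have hpolar := integrable_complex_iff_integrableOn_polar.1 hf
  rw [IntegrableOn, Measure.volume_eq_prod, ← Measure.prod_restrict] at hpolar
  calc
    ∫ z, f z = ∫ p in Ioi 0 ×ˢ Ioo (-π) π, p.1 • f (circleMap 0 p.1 p.2) := by
      rw [← Complex.integral_comp_polarCoord_symm]
      simp only [complexPolarCoord_symm_eq_circleMap, polarCoord_target]
    _ = ∫ r in Ioi 0, ∫ θ in Ioo (-π) π, r • f (circleMap 0 r θ) := by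
      rw [Measure.volume_eq_prod, ← Measure.prod_restrict, integral_prod _ hpolar]
    _ = _ := by
      simp only [integral_smul, setIntegral_Ioo_neg_pi_pi_comp_circleMap, smul_comm _ (2 * π)]

end PolarCoordinates

section Newton

open Real

lemma circleAverage_log_norm_sub_const_eq_log_max {c a : ℂ} {r : ℝ} (hr : 0 < r) :
    circleAverage (log ‖· - a‖) c r = log (max ‖c - a‖ r) := by
  rw [circleAverage_log_norm_sub_const_eq_log_radius_add_posLog hr.ne',
    posLog_eq_log_max_one (by positivity), ← log_mul hr.ne' (by positivity),
    mul_max_of_nonneg _ _ hr.le, mul_one, mul_inv_cancel_left₀ hr.ne', max_comm]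

lemma neg_log_max_le_abs_log {b r : ℝ} (hr : 0 < r) : -log (max b r) ≤ |log r| :=
  (neg_le_neg (log_le_log hr (le_max_right b r))).trans (neg_le_abs _)

lemma abs_log_eq_two_mul_posLog_sub_log (t : ℝ) : |log t| = 2 * log⁺ t - log t := by
  rw [← half_mul_log_add_log_abs]
  ring

lemma circleAverage_abs_log_norm_sub_const_le (a : ℂ) {r : ℝ} (hr : 0 < r) :
    circleAverage (fun z ↦ |log ‖z - a‖|) 0 r ≤ 2 * (log 2 + log⁺ ‖a‖) + 3 * |log r| := by
  have hci : CircleIntegrable (log ‖· - a‖) 0 r := circleIntegrable_log_norm_sub_const r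
  set B := 2 * (log 2 + log⁺ ‖a‖ + |log r|)
  have hle : ∀ z ∈ sphere (0 : ℂ) |r|, |log ‖z - a‖| ≤ B - log ‖z - a‖ := by
    intro z hz
    have hzr : ‖z‖ = r := (mem_sphere_zero_iff_norm.1 hz).trans (abs_of_pos hr)
    have hpos : log⁺ ‖z - a‖ ≤ log⁺ ‖z‖ + log⁺ ‖a‖ + log 2 := by
      simpa only [sub_eq_add_neg, norm_neg] using posLog_norm_add_le z (-a)
    have hlog : log⁺ r ≤ |log r| := max_le (abs_nonneg _) (le_abs_self _)
    rw [hzr] at hpos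
    linarith [abs_log_eq_two_mul_posLog_sub_log ‖z - a‖]
  calc
    circleAverage (fun z ↦ |log ‖z - a‖|) 0 r
      ≤ circleAverage (fun z ↦ B - log ‖z - a‖) 0 r :=
        circleAverage_mono hci.abs ((circleIntegrable_const B 0 r).sub hci) hle
    _ = B - log (max ‖a‖ r) := by
      rw [circleAverage_fun_sub (circleIntegrable_const B 0 r) hci, circleAverage_const,
        circleAverage_log_norm_sub_const_eq_log_max hr, zero_sub, norm_neg]
    _ ≤ 2 * (log 2 + log⁺ ‖a‖) + 3 * |log r| := by
      linarith [neg_log_max_le_abs_log (b := ‖a‖) hr]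

lemma eqOn_sphere_comp_norm_mul (w : ℝ → ℝ) (g : ℂ → ℝ) (r : ℝ) :
    EqOn (fun z ↦ w ‖z‖ * g z) (fun z ↦ w |r| • g z) (sphere 0 |r|) := fun z hz ↦ by
  simp only [mem_sphere_zero_iff_norm.1 hz, smul_eq_mul]

lemma circleAverage_comp_norm_mul (w : ℝ → ℝ) (g : ℂ → ℝ) (r : ℝ) :
    circleAverage (fun z ↦ w ‖z‖ * g z) 0 r = w |r| * circleAverage g 0 r := by
  rw [circleAverage_congr_sphere (eqOn_sphere_comp_norm_mul w g r), circleAverage_fun_smul,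
    smul_eq_mul]

lemma circleIntegrable_comp_norm_mul (w : ℝ → ℝ) {g : ℂ → ℝ} {r : ℝ}
    (hg : CircleIntegrable g 0 r) : CircleIntegrable (fun z ↦ w ‖z‖ * g z) 0 r :=
  (circleIntegrable_congr (eqOn_sphere_comp_norm_mul w g r)).2 hg.const_smul

variable {w : ℝ → ℝ}

theorem integrable_comp_norm_mul_log_norm_sub (hw : IntegrableOn (fun r ↦ r * w r) (Ioi 0))
    (hwlog : IntegrableOn (fun r ↦ r * w r * log r) (Ioi 0)) (a : ℂ) :
    Integrable fun z : ℂ ↦ w ‖z‖ * log ‖z - a‖ := by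
  have hwm : AEStronglyMeasurable fun z : ℂ ↦ w ‖z‖ := by
    refine ((integrable_fun_norm_addHaar volume).2 ?_).aestronglyMeasurable
    simpa [Complex.finrank_real_complex] using hw
  have hlogm : Measurable fun z : ℂ ↦ log ‖z - a‖ := by fun_prop
  set C := 2 * (log 2 + log⁺ ‖a‖)
  refine integrable_of_circleAverage_norm_le
    (g := fun r ↦ C * |r * w r| + 3 * |r * w r * log r|)
    (hwm.mul hlogm.aestronglyMeasurable)
    (fun r _ ↦ circleIntegrable_comp_norm_mul w (circleIntegrable_log_norm_sub_const r))
    ((hw.abs.const_mul C).add (hwlog.abs.const_mul 3)) fun r hr ↦ ?_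
  simp only [norm_mul, norm_eq_abs]
  calc
    r * circleAverage (fun z ↦ |w ‖z‖| * |log ‖z - a‖|) 0 r
      = |r * w r| * circleAverage (fun z ↦ |log ‖z - a‖|) 0 r := by
        rw [circleAverage_comp_norm_mul (|w ·|), abs_mul, abs_of_pos hr, mul_assoc]
    _ ≤ |r * w r| * (C + 3 * |log r|) := by
        gcongr
        exact circleAverage_abs_log_norm_sub_const_le a hr
    _ = C * |r * w r| + 3 * |r * w r * log r| := by
        rw [abs_mul (r * w r)]
        ring

theorem integral_comp_norm_mul_log_norm_sub (hw : IntegrableOn (fun r ↦ r * w r) (Ioi 0))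
    (hwlog : IntegrableOn (fun r ↦ r * w r * log r) (Ioi 0)) (a : ℂ) :
    ∫ z : ℂ, w ‖z‖ * log ‖z - a‖ = 2 * π * ∫ r in Ioi 0, r * w r * log (max ‖a‖ r) := by
  rw [integral_eq_integral_circleAverage (integrable_comp_norm_mul_log_norm_sub hw hwlog a),
    smul_eq_mul]
  congr 1
  refine setIntegral_congr_fun measurableSet_Ioi fun r (hr : 0 < r) ↦ ?_
  simp only [circleAverage_comp_norm_mul w, abs_of_pos hr, smul_eq_mul,
    circleAverage_log_norm_sub_const_eq_log_max hr, zero_sub, norm_neg, mul_assoc]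

theorem integral_log_norm_sub_mul_comp_norm {E : Type*} [NormedAddCommGroup E]
    [InnerProductSpace ℝ E] [FiniteDimensional ℝ E] [MeasurableSpace E] [BorelSpace E]
    (hE : Module.finrank ℝ E = 2) (hw : IntegrableOn (fun r ↦ r * w r) (Ioi 0))
    (hwlog : IntegrableOn (fun r ↦ r * w r * log r) (Ioi 0)) (x : E) :
    ∫ y : E, log ‖x - y‖ * w ‖y‖ = 2 * π * ∫ r in Ioi 0, r * w r * log (max ‖x‖ r) := by
  let e : ℂ ≃ₗᵢ[ℝ] E :=
    Complex.orthonormalBasisOneI.equiv (stdOrthonormalBasis ℝ E) (finCongr hE.symm)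
  rw [← e.symm.norm_map, ← integral_comp_norm_mul_log_norm_sub hw hwlog,
    ← e.measurePreserving.integral_comp e.toHomeomorph.measurableEmbedding]
  refine integral_congr_ae (.of_forall fun z ↦ ?_)
  have hnorm : ‖x - e z‖ = ‖z - e.symm x‖ := by
    rw [norm_sub_rev, ← e.norm_map, map_sub, e.apply_symm_apply]
  simp only [hnorm, e.norm_map, mul_comm]

end Newton

section Bubble

open Real

/-- The density `-Δu = 8K² / (1 + K²r²)²` of the bubble of concentration `K`, as a function of the
radius `r = |x|`. -/
def bubbleDensity (K r : ℝ) : ℝ := 8 * K ^ 2 / (1 + K ^ 2 * r ^ 2) ^ 2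

/-- The mass `∫ s in 0..r, s * bubbleDensity K s` of the bubble in the disk of radius `r`, up to the
angular factor `2π`. -/
def bubbleMass (K r : ℝ) : ℝ := 4 * K ^ 2 * r ^ 2 / (1 + K ^ 2 * r ^ 2)

/-- The logarithmic moment `∫ s in 0..r, s * bubbleDensity K s * log s` of the bubble in the disk of
radius `r`, up to the angular factor `2π`; the formula results from integrating by parts against
`bubbleMass`. -/
def bubbleLogMoment (K r : ℝ) : ℝ := bubbleMass K r * log r - 2 * log (1 + K ^ 2 * r ^ 2)

variable {K : ℝ}

lemma continuous_bubbleDensity (K : ℝ) : Continuous (bubbleDensity K) := by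
  unfold bubbleDensity
  exact continuous_const.div (by fun_prop) fun r ↦ by positivity

lemma bubbleDensity_nonneg (K r : ℝ) : 0 ≤ bubbleDensity K r := by
  unfold bubbleDensity
  positivity

lemma hasDerivAt_one_add_sq_mul_sq (K r : ℝ) :
    HasDerivAt (fun r ↦ 1 + K ^ 2 * r ^ 2) (2 * K ^ 2 * r) r := by
  convert! ((hasDerivAt_pow 2 r).const_mul (K ^ 2)).const_add 1 using 1
  push_cast
  ring

lemma hasDerivAt_bubbleMass (K r : ℝ) :
    HasDerivAt (bubbleMass K) (r * bubbleDensity K r) r := by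
  have hnum : HasDerivAt (fun r ↦ 4 * K ^ 2 * r ^ 2) (8 * K ^ 2 * r) r := by
    convert! (hasDerivAt_pow 2 r).const_mul (4 * K ^ 2) using 1
    push_cast
    ring
  convert! hnum.div (hasDerivAt_one_add_sq_mul_sq K r) (by positivity) using 1
  unfold bubbleDensity
  ring

lemma hasDerivAt_bubbleLogMoment (K : ℝ) {r : ℝ} (hr : r ≠ 0) :
    HasDerivAt (bubbleLogMoment K) (r * bubbleDensity K r * log r) r := by
  convert! ((hasDerivAt_bubbleMass K r).mul (hasDerivAt_log hr)).sub
    (((hasDerivAt_one_add_sq_mul_sq K r).log (by positivity)).const_mul 2) using 1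
  unfold bubbleMass
  field_simp
  ring

lemma continuous_bubbleLogMoment (K : ℝ) : Continuous (bubbleLogMoment K) := by
  have hrw : bubbleLogMoment K = fun r ↦ 4 * K ^ 2 * r / (1 + K ^ 2 * r ^ 2) * (r * log r)
      - 2 * log (1 + K ^ 2 * r ^ 2) := by
    ext r
    unfold bubbleLogMoment bubbleMass
    ring
  have hden : ∀ r : ℝ, 1 + K ^ 2 * r ^ 2 ≠ 0 := fun r ↦ by positivity
  rw [hrw]
  exact ((Continuous.div (by fun_prop) (by fun_prop) hden).mul continuous_mul_log).sub
    (continuous_const.mul (Continuous.log (by fun_prop) hden))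

lemma tendsto_bubbleMass_atTop (hK : K ≠ 0) : Tendsto (bubbleMass K) atTop (𝓝 4) := by
  have hden : Tendsto (fun r : ℝ ↦ 1 + K ^ 2 * r ^ 2) atTop atTop :=
    tendsto_atTop_add_const_left _ _
      ((tendsto_pow_atTop two_ne_zero).const_mul_atTop (by positivity))
  have hlim := (hden.inv_tendsto_atTop.const_mul 4).const_sub 4
  rw [mul_zero, sub_zero] at hlim
  refine hlim.congr fun r ↦ ?_
  simp only [bubbleMass, Pi.inv_apply]
  field_simp
  ring

lemma tendsto_bubbleLogMoment_atTop (hK : 0 < K) :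
    Tendsto (bubbleLogMoment K) atTop (𝓝 (-4 * log K)) := by
  have hinv : Tendsto (fun r : ℝ ↦ (r ^ 2)⁻¹ + K ^ 2) atTop (𝓝 (0 + K ^ 2)) :=
    (tendsto_inv_atTop_zero.comp (tendsto_pow_atTop two_ne_zero)).add_const _
  have hlog : Tendsto (fun r : ℝ ↦ log (r ^ 2) ^ 1 / (K ^ 2 * r ^ 2 + 1)) atTop (𝓝 0) :=
    (tendsto_pow_log_div_mul_add_atTop (K ^ 2) 1 1 (by positivity)).comp
      (tendsto_pow_atTop two_ne_zero)
  have hlim := (hlog.const_mul (-2)).sub ((hinv.log (by positivity)).const_mul 2)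
  convert! hlim.congr' ?_ using 2
  · rw [zero_add, log_pow]
    push_cast
    ring
  filter_upwards [eventually_gt_atTop 0] with r hr
  have hsum : (r ^ 2)⁻¹ + K ^ 2 = (1 + K ^ 2 * r ^ 2) / r ^ 2 := by field_simp
  rw [hsum, log_div (by positivity) (by positivity), log_pow, bubbleLogMoment, bubbleMass]
  push_cast
  field_simp
  ring

lemma integrableOn_mul_bubbleDensity (hK : K ≠ 0) :
    IntegrableOn (fun r ↦ r * bubbleDensity K r) (Ioi 0) :=
  integrableOn_Ioi_deriv_of_nonneg' (fun r _ ↦ hasDerivAt_bubbleMass K r)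
    (fun r hr ↦ mul_nonneg (le_of_lt hr) (bubbleDensity_nonneg K r)) (tendsto_bubbleMass_atTop hK)

lemma integrableOn_mul_bubbleDensity_mul_log (hK : 0 < K) :
    IntegrableOn (fun r ↦ r * bubbleDensity K r * log r) (Ioi 0) := by
  have hnear : IntegrableOn (fun r ↦ r * bubbleDensity K r * log r) (Ioc 0 1) := by
    have hcont : Continuous fun r ↦ bubbleDensity K r * (r * log r) :=
      (continuous_bubbleDensity K).mul continuous_mul_log
    exact hcont.integrableOn_Ioc.congr_fun (fun r _ ↦ by ring) measurableSet_Ioc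
  have hfar : IntegrableOn (fun r ↦ r * bubbleDensity K r * log r) (Ioi 1) :=
    integrableOn_Ioi_deriv_of_nonneg'
      (fun r hr ↦ hasDerivAt_bubbleLogMoment K (zero_lt_one.trans_le hr).ne')
      (fun r (hr : 1 < r) ↦ mul_nonneg
        (mul_nonneg (zero_lt_one.trans hr).le (bubbleDensity_nonneg K r)) (log_nonneg hr.le))
      (tendsto_bubbleLogMoment_atTop hK)
  simpa only [Ioc_union_Ioi_eq_Ioi zero_le_one] using hnear.union hfar

lemma integral_Ioc_mul_bubbleDensity (K : ℝ) {a : ℝ} (ha : 0 ≤ a) :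
    ∫ r in Ioc 0 a, r * bubbleDensity K r = bubbleMass K a := by
  rw [← intervalIntegral.integral_of_le ha,
    intervalIntegral.integral_eq_sub_of_hasDerivAt (fun r _ ↦ hasDerivAt_bubbleMass K r)
      ((continuous_id.mul (continuous_bubbleDensity K)).intervalIntegrable _ _)]
  simp [bubbleMass]

lemma integral_Ioi_mul_bubbleDensity_mul_log (hK : 0 < K) {a : ℝ} (ha : 0 ≤ a) :
    ∫ r in Ioi a, r * bubbleDensity K r * log r = -4 * log K - bubbleLogMoment K a :=
  integral_Ioi_of_hasDerivAt_of_tendsto (continuous_bubbleLogMoment K).continuousWithinAt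
    (fun _ hr ↦ hasDerivAt_bubbleLogMoment K (ha.trans_lt hr).ne')
    ((integrableOn_mul_bubbleDensity_mul_log hK).mono_set (Ioi_subset_Ioi ha))
    (tendsto_bubbleLogMoment_atTop hK)

theorem integral_mul_bubbleDensity_mul_log_max (hK : 0 < K) {a : ℝ} (ha : 0 ≤ a) :
    ∫ r in Ioi 0, r * bubbleDensity K r * log (max a r)
      = 2 * log (1 + K ^ 2 * a ^ 2) - 4 * log K := by
  have hnear : EqOn (fun r ↦ r * bubbleDensity K r * log (max a r))
      (fun r ↦ r * bubbleDensity K r * log a) (Ioc 0 a) := fun r hr ↦ by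
    simp only [max_eq_left hr.2]
  have hfar : EqOn (fun r ↦ r * bubbleDensity K r * log (max a r))
      (fun r ↦ r * bubbleDensity K r * log r) (Ioi a) := fun r (hr : a < r) ↦ by
    simp only [max_eq_right hr.le]
  have hintNear : IntegrableOn (fun r ↦ r * bubbleDensity K r * log a) (Ioc 0 a) :=
    ((integrableOn_mul_bubbleDensity hK.ne').mono_set Ioc_subset_Ioi_self).mul_const _
  have hintFar : IntegrableOn (fun r ↦ r * bubbleDensity K r * log r) (Ioi a) :=
    (integrableOn_mul_bubbleDensity_mul_log hK).mono_set (Ioi_subset_Ioi ha)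
  rw [← Ioc_union_Ioi_eq_Ioi ha, setIntegral_union (Ioc_disjoint_Ioi le_rfl) measurableSet_Ioi
      (hintNear.congr_fun hnear.symm measurableSet_Ioc)
      (hintFar.congr_fun hfar.symm measurableSet_Ioi),
    setIntegral_congr_fun measurableSet_Ioc hnear, setIntegral_congr_fun measurableSet_Ioi hfar,
    integral_mul_const, integral_Ioc_mul_bubbleDensity K ha,
    integral_Ioi_mul_bubbleDensity_mul_log hK ha, bubbleLogMoment]
  ring

theorem integral_gammaKer_sub_mul_bubbleDensity (hK : 0 < K) (x : E2) :
    ∫ y : E2, gammaKer (x - y) * bubbleDensity K ‖y‖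
      = 4 * log K - 2 * log (1 + K ^ 2 * ‖x‖ ^ 2) := by
  have hnewton := integral_log_norm_sub_mul_comp_norm finrank_euclideanSpace_fin
    (integrableOn_mul_bubbleDensity hK.ne') (integrableOn_mul_bubbleDensity_mul_log hK) x
  simp only [gammaKer, mul_assoc]
  rw [integral_const_mul, hnewton, integral_mul_bubbleDensity_mul_log_max hK (norm_nonneg x)]
  field_simp
  ring

end Bubble

theorem stmt_18_general {A : ℝ} (hA : 0 < A) :
    (∀ K : ℝ, 0 < K → ∀ x : E2,
      2 * Real.log (A * K / (1 + K ^ 2 * ‖x‖ ^ 2))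
          - ∫ y : E2, gammaKer (x - y) * (8 * K ^ 2 / (1 + K ^ 2 * ‖y‖ ^ 2) ^ 2)
        = 2 * Real.log A - 2 * Real.log K) ∧
    Tendsto (fun K : ℝ ↦ 2 * Real.log A - 2 * Real.log K) atTop atBot := by
  refine ⟨fun K hK x ↦ ?_, ?_⟩
  · have hpot := integral_gammaKer_sub_mul_bubbleDensity hK x
    simp only [bubbleDensity] at hpot
    rw [hpot, Real.log_div (by positivity) (by positivity), Real.log_mul hA.ne' hK.ne']
    ring
  · exact tendsto_atBot_add_const_left _ _
      (tendsto_neg_atTop_atBot.comp (Real.tendsto_log_atTop.const_mul_atTop two_pos))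

/-- Example 3.3: the bubbles `u_k`.
With `A = (4(2-μ)/π)^{1/(4-μ)}`, `u_k(x) = 2 log(Ak/(1+k²|x|²))` and
`F_k(x) = 8k²/(1+k²|x|²)²` (so that `-Δu_k = F_k = V_k I_μ[e^{λu_k}χ_{B_2}] e^{λu_k}`),
the function `u_k - Γ∗F_k` is the constant `2 log A - 2 log k`; in particular
`u_k - Γ∗F_k → -∞` uniformly as `k → ∞`. -/
theorem stmt_18
    (μ : ℝ) (hμ : μ ∈ Set.Ioo (0 : ℝ) 2)
    (lam : ℝ) (hlam : lam = (4 - μ) / 4)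
    (A : ℝ) (hA : A = (4 * (2 - μ) / Real.pi) ^ ((1 : ℝ) / (4 - μ)))
    (u : ℕ → E2 → ℝ)
    (hu : ∀ (k : ℕ) (x : E2),
      u k x = 2 * Real.log (A * (k : ℝ) / (1 + (k : ℝ) ^ 2 * ‖x‖ ^ 2)))
    (F : ℕ → E2 → ℝ)
    (hF : ∀ (k : ℕ) (x : E2),
      F k x = 8 * (k : ℝ) ^ 2 / (1 + (k : ℝ) ^ 2 * ‖x‖ ^ 2) ^ 2) :
    (∀ k : ℕ, 1 ≤ k → ∀ x : E2,
      u k x - ∫ y : E2, gammaKer (x - y) * F k y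
        = 2 * Real.log A - 2 * Real.log (k : ℝ)) ∧
    Tendsto (fun k : ℕ => 2 * Real.log A - 2 * Real.log (k : ℝ)) atTop atBot := by
  have hApos : 0 < A :=
    hA ▸ Real.rpow_pos_of_pos (div_pos (by linarith [hμ.2]) Real.pi_pos) _
  obtain ⟨hconst, hlim⟩ := stmt_18_general hApos
  refine ⟨fun k hk x ↦ ?_, hlim.comp tendsto_natCast_atTop_atTop⟩
  simpa only [hu, hF] using hconst k (Nat.cast_pos.2 hk) x
end
end
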